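/- There exists a constant C depending only on m and δ such that for every measurable Z : ℝ² → ℂ: ‖⟨k⟩^{−1/2}·A(k)^{2δ}·p^{−1/4}·Z‖_{L¹(ℝ²)} ≤ C·‖⟨k⟩^m·A(k)^{2δ}·min(|k|^{1/4},1)·p^{−1/4}·Z‖_{L²_k L¹_η} ≤ C·(1 + μ^{−δ})·E. -/

import Mathlib

open MeasureTheory Real
open scoped ENNReal NNReal

noncomputable section

/-- The Japanese bracket `⟨k⟩ = (1+k²)^{1/2}`. -/
def jap (k : ℝ) : ℝ := Real.sqrt (1 + k ^ 2)

/-- The moving-frame symbol `p(k,η) = k² + (η − kt)²`. -/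
def pw (t k η : ℝ) : ℝ := k ^ 2 + (η - k * t) ^ 2

/-- The weight `A(k)`. -/
def Aw (μ k : ℝ) : ℝ :=
  if |k| < μ then 1 else μ ^ ((1 : ℝ) / 3) * |k| ^ (-(1 : ℝ) / 3)

/-- The weight `B(k)`. -/
def Bw (μ k : ℝ) : ℝ :=
  if |k| < μ then μ ^ (-(1 : ℝ) / 2) else μ ^ ((1 : ℝ) / 6) * |k| ^ (-(2 : ℝ) / 3)

/-- Weighted `L¹(ℝ²)` norm `‖w·Z‖_{L¹}` (iterated, value in `[0,∞]`). -/
def L1n (w : ℝ → ℝ → ℝ) (Z : ℝ × ℝ → ℂ) : ℝ≥0∞ :=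
  ∫⁻ k : ℝ, ∫⁻ η : ℝ, ENNReal.ofReal (w k η) * (‖Z (k, η)‖₊ : ℝ≥0∞)

/-- Weighted `L²(ℝ²)` norm `‖w·Z‖_{L²}` (value in `[0,∞]`). -/
def L2n (w : ℝ → ℝ → ℝ) (Z : ℝ × ℝ → ℂ) : ℝ≥0∞ :=
  (∫⁻ k : ℝ, ∫⁻ η : ℝ,
      (ENNReal.ofReal (w k η) * (‖Z (k, η)‖₊ : ℝ≥0∞)) ^ 2) ^ ((1 : ℝ) / 2)

/-- Weighted mixed norm `‖w·Z‖_{L²_k L¹_η}` (value in `[0,∞]`). -/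
def L2L1n (w : ℝ → ℝ → ℝ) (Z : ℝ × ℝ → ℂ) : ℝ≥0∞ :=
  (∫⁻ k : ℝ,
      (∫⁻ η : ℝ, ENNReal.ofReal (w k η) * (‖Z (k, η)‖₊ : ℝ≥0∞)) ^ 2) ^ ((1 : ℝ) / 2)

/-- The energy `E = ‖⟨k⟩^m Z‖_{L²} + ‖⟨k⟩^m A(k)(η−kt) Z‖_{L²}`. -/
def En (t μ m : ℝ) (Z : ℝ × ℝ → ℂ) : ℝ≥0∞ :=
  L2n (fun k _ => jap k ^ m) Z + L2n (fun k η => jap k ^ m * Aw μ k * |η - k * t|) Z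

/-- The dissipation `D_γ = μ·∬ ⟨k⟩^{2m} p |Z|²`. -/
def Dg (t μ m : ℝ) (Z : ℝ × ℝ → ℂ) : ℝ≥0∞ :=
  ENNReal.ofReal μ * ∫⁻ k : ℝ, ∫⁻ η : ℝ,
    ENNReal.ofReal (jap k ^ (2 * m) * pw t k η) * (‖Z (k, η)‖₊ : ℝ≥0∞) ^ 2

/-- The dissipation `D_τ = ∬ ⟨k⟩^{2m} k² p⁻¹ |Z|²`. -/
def Dtau (t m : ℝ) (Z : ℝ × ℝ → ℂ) : ℝ≥0∞ :=
  ∫⁻ k : ℝ, ∫⁻ η : ℝ,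
    ENNReal.ofReal (jap k ^ (2 * m) * k ^ 2 / pw t k η) * (‖Z (k, η)‖₊ : ℝ≥0∞) ^ 2

/-- The dissipation `D_α = μ·∬ ⟨k⟩^{2m} A(k)² (η−kt)² p |Z|²`. -/
def Dal (t μ m : ℝ) (Z : ℝ × ℝ → ℂ) : ℝ≥0∞ :=
  ENNReal.ofReal μ * ∫⁻ k : ℝ, ∫⁻ η : ℝ,
    ENNReal.ofReal (jap k ^ (2 * m) * Aw μ k ^ 2 * (η - k * t) ^ 2 * pw t k η)
      * (‖Z (k, η)‖₊ : ℝ≥0∞) ^ 2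

/-- The dissipation `D_{τα} = ∬ ⟨k⟩^{2m} A(k)² k² (η−kt)² p⁻¹ |Z|²`. -/
def Dta (t μ m : ℝ) (Z : ℝ × ℝ → ℂ) : ℝ≥0∞ :=
  ∫⁻ k : ℝ, ∫⁻ η : ℝ,
    ENNReal.ofReal (jap k ^ (2 * m) * Aw μ k ^ 2 * k ^ 2 * (η - k * t) ^ 2 / pw t k η)
      * (‖Z (k, η)‖₊ : ℝ≥0∞) ^ 2

/-- The dissipation `D_β = ∬ ⟨k⟩^{2m} B(k)² k² |Z|²`. -/
def Db (t μ m : ℝ) (Z : ℝ × ℝ → ℂ) : ℝ≥0∞ :=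
  ∫⁻ k : ℝ, ∫⁻ η : ℝ,
    ENNReal.ofReal (jap k ^ (2 * m) * Bw μ k ^ 2 * k ^ 2) * (‖Z (k, η)‖₊ : ℝ≥0∞) ^ 2

/-- Integrable majorant: `|x|^{-a}` near zero, `|x|^{-b}` at infinity. -/
def Hmaj (a b x : ℝ) : ℝ := if |x| ≤ 1 then |x| ^ (-a) else |x| ^ (-b)

lemma Hmaj_nonneg (a b x : ℝ) : 0 ≤ Hmaj a b x := by
  unfold Hmaj; split_ifs <;> positivity

lemma Hmaj_integrable (a b : ℝ) (ha : a < 1) (hb : 1 < b) : Integrable (Hmaj a b) := by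
  have hpos : IntegrableOn (Hmaj a b) (Set.Ioi 0) := by
    rw [← Set.Ioc_union_Ioi_eq_Ioi (zero_le_one (α := ℝ))]
    refine IntegrableOn.union ?_ ?_
    · have h := (intervalIntegral.intervalIntegrable_rpow' (a := 0) (b := 1)
        (r := -a) (by linarith)).1
      refine h.congr_fun (fun x hx => ?_) measurableSet_Ioc
      simp only [Hmaj]
      rw [abs_of_pos hx.1, if_pos hx.2]
    · have h := integrableOn_Ioi_rpow_of_lt (a := -b) (c := 1) (by linarith) one_pos
      refine h.congr_fun (fun x hx => ?_) measurableSet_Ioi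
      have hx' : (1 : ℝ) < x := hx
      simp only [Hmaj]
      rw [abs_of_pos (by linarith), if_neg (by linarith)]
  have hneg : IntegrableOn (Hmaj a b) (Set.Iic 0) := by
    have h : IntegrableOn (fun x => Hmaj a b (-x)) (Set.Iio 0) := by
      have h2 := ((Measure.measurePreserving_neg (volume : Measure ℝ)).integrableOn_comp_preimage
        (Homeomorph.neg ℝ).measurableEmbedding (f := Hmaj a b) (s := Set.Ioi 0)).2 hpos
      simpa [Function.comp_def] using h2
    rw [integrableOn_Iic_iff_integrableOn_Iio]
    refine h.congr_fun (fun x _ => ?_) measurableSet_Iio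
    simp [Hmaj]
  have := hneg.union hpos
  rwa [Set.Iic_union_Ioi, integrableOn_univ] at this

lemma cs_sq {f g : ℝ → ℝ≥0∞} (hf : Measurable f) (hg : Measurable g) :
    ∫⁻ x, f x * g x ≤ (∫⁻ x, f x ^ 2) ^ ((1:ℝ)/2) * (∫⁻ x, g x ^ 2) ^ ((1:ℝ)/2) := by
  have h := ENNReal.lintegral_mul_le_Lp_mul_Lq volume (p := 2) (q := 2)
    Real.HolderConjugate.two_two hf.aemeasurable hg.aemeasurable
  simpa using h

lemma half_sq (x : ℝ≥0∞) : (x ^ ((1:ℝ)/2)) ^ 2 = x := by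
  rw [← ENNReal.rpow_natCast, ← ENNReal.rpow_mul]; norm_num

lemma jap_pos (k : ℝ) : 0 < jap k := by unfold jap; positivity

lemma one_le_jap (k : ℝ) : 1 ≤ jap k := by
  unfold jap; rw [Real.one_le_sqrt]; nlinarith [sq_nonneg k]

lemma abs_le_jap (k : ℝ) : |k| ≤ jap k := by
  unfold jap; apply Real.abs_le_sqrt; linarith

lemma Aw_pos (μ k : ℝ) (hμ : 0 < μ) : 0 < Aw μ k := by
  unfold Aw
  split_ifs with h
  · exact one_pos
  · have : 0 < |k| := by linarith
    positivity

/-- The Cauchy–Schwarz weight in `k`. -/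
def Gw (m k : ℝ) : ℝ := jap k ^ (-(1:ℝ)/2 - m) * (min (|k| ^ ((1 : ℝ) / 4)) 1)⁻¹

lemma Gw_sq_le (m k : ℝ) (hm : 0 < m) (hk : k ≠ 0) :
    Gw m k ^ 2 ≤ Hmaj (1/2) (1 + 2 * m) k := by
  have hk0 : 0 < |k| := abs_pos.2 hk
  have hj : (jap k ^ (-(1:ℝ)/2 - m)) ^ 2 = jap k ^ (-(1 + 2 * m)) := by
    rw [← Real.rpow_natCast, ← Real.rpow_mul (jap_pos k).le]; congr 1; push_cast; ring
  unfold Gw Hmaj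
  rw [mul_pow, hj]
  split_ifs with h
  · rw [min_eq_left (Real.rpow_le_one hk0.le h (by norm_num))]
    have h1 : ((|k| ^ ((1 : ℝ) / 4))⁻¹) ^ 2 = |k| ^ (-(1/2) : ℝ) := by
      rw [← Real.rpow_neg hk0.le, ← Real.rpow_natCast, ← Real.rpow_mul hk0.le]; norm_num
    rw [h1]
    have h2 : jap k ^ (-(1 + 2 * m)) ≤ 1 :=
      Real.rpow_le_one_of_one_le_of_nonpos (one_le_jap k) (by linarith)
    have h3 : 0 ≤ |k| ^ (-(1/2) : ℝ) := by positivity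
    nlinarith
  · push Not at h
    rw [min_eq_right (Real.one_le_rpow h.le (by norm_num))]
    simp only [inv_one, one_pow, mul_one]
    exact Real.rpow_le_rpow_of_nonpos hk0 (abs_le_jap k) (by linarith)

/-- The Cauchy–Schwarz weight in `η`. -/
def Fw (δ A k s : ℝ) : ℝ :=
  A ^ (2 * δ) * min (|k| ^ ((1 : ℝ) / 4)) 1 * (k ^ 2 + s ^ 2) ^ (-(1 : ℝ) / 4)
    / Real.sqrt (1 + A ^ 2 * s ^ 2)

lemma Q_le (δ u : ℝ) (hu : u ≠ 0) :
    |u| ^ (4 * δ - 1) / (1 + u ^ 2) ≤ Hmaj (1 - 4 * δ) (3 - 4 * δ) u := by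
  have hu0 : 0 < |u| := abs_pos.2 hu
  unfold Hmaj
  split_ifs with h
  · rw [neg_sub]
    apply div_le_self (by positivity)
    nlinarith [sq_nonneg u]
  · rw [div_le_iff₀ (by positivity)]
    have : |u| ^ (4 * δ - 1) = |u| ^ (-(3 - 4 * δ)) * u ^ 2 := by
      rw [← sq_abs u, ← Real.rpow_natCast, ← Real.rpow_add hu0]; congr 1; push_cast; ring
    rw [this]
    have h3 : 0 ≤ |u| ^ (-(3 - 4 * δ)) := by positivity
    nlinarith

lemma p_le (δ k s : ℝ) (h0 : 0 < δ) (h1 : δ < 1/12) (hk : k ≠ 0) (hs : s ≠ 0) :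
    (k ^ 2 + s ^ 2) ^ (-(1:ℝ)/2) ≤ |k| ^ (-(4 * δ)) * |s| ^ (4 * δ - 1) := by
  have hk0 : 0 < |k| := abs_pos.2 hk
  have hs0 : 0 < |s| := abs_pos.2 hs
  have hp : 0 < k ^ 2 + s ^ 2 := by positivity
  have e1 : |k| ^ (-(4 * δ)) = (k ^ 2) ^ (-(2 * δ)) := by
    rw [← sq_abs k, ← Real.rpow_natCast, ← Real.rpow_mul hk0.le]; congr 1; push_cast; ring
  have e2 : |s| ^ (4 * δ - 1) = (s ^ 2) ^ (2 * δ - 1/2) := by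
    rw [← sq_abs s, ← Real.rpow_natCast, ← Real.rpow_mul hs0.le]; congr 1; push_cast; ring
  have e3 : (k ^ 2 + s ^ 2) ^ (-(1:ℝ)/2)
      = (k ^ 2 + s ^ 2) ^ (-(2 * δ)) * (k ^ 2 + s ^ 2) ^ (2 * δ - 1/2) := by
    rw [← Real.rpow_add hp]; congr 1; ring
  rw [e1, e2, e3]
  apply mul_le_mul
  · exact Real.rpow_le_rpow_of_nonpos (by positivity) (by nlinarith [sq_nonneg s]) (by linarith)
  · exact Real.rpow_le_rpow_of_nonpos (by positivity) (by nlinarith [sq_nonneg k]) (by linarith)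
  · positivity
  · positivity

lemma min_le' (δ k : ℝ) (h0 : 0 < δ) (h1 : δ < 1/12) (hk : k ≠ 0) :
    (min (|k| ^ ((1 : ℝ) / 4)) 1) ^ 2 * |k| ^ (-(4 * δ)) ≤ 1 := by
  have hk0 : 0 < |k| := abs_pos.2 hk
  rcases le_total |k| 1 with h | h
  · rw [min_eq_left (Real.rpow_le_one hk0.le h (by norm_num)), ← Real.rpow_natCast,
      ← Real.rpow_mul hk0.le, ← Real.rpow_add hk0]
    apply Real.rpow_le_one hk0.le h
    push_cast; linarith
  · rw [min_eq_right (Real.one_le_rpow h (by norm_num)), one_pow, one_mul]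
    exact Real.rpow_le_one_of_one_le_of_nonpos h (by linarith)

lemma Fw_sq_le (δ A k s : ℝ) (h0 : 0 < δ) (h1 : δ < 1/12) (hA : 0 < A) (hk : k ≠ 0)
    (hs : s ≠ 0) :
    Fw δ A k s ^ 2 ≤ A * Hmaj (1 - 4 * δ) (3 - 4 * δ) (A * s) := by
  have hs0 : 0 < |s| := abs_pos.2 hs
  have hp : 0 < k ^ 2 + s ^ 2 := by positivity
  have hQ := Q_le δ (A * s) (by positivity)
  refine le_trans ?_ (mul_le_mul_of_nonneg_left hQ hA.le)
  have e1 : (A ^ (2 * δ)) ^ 2 = A ^ (4 * δ) := by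
    rw [← Real.rpow_natCast, ← Real.rpow_mul hA.le]; congr 1; push_cast; ring
  have e2 : ((k ^ 2 + s ^ 2) ^ (-(1 : ℝ) / 4)) ^ 2 = (k ^ 2 + s ^ 2) ^ (-(1:ℝ)/2) := by
    rw [← Real.rpow_natCast, ← Real.rpow_mul hp.le]; congr 1; push_cast; ring
  have e3 : A * |A * s| ^ (4 * δ - 1) = A ^ (4 * δ) * |s| ^ (4 * δ - 1) := by
    rw [abs_mul, abs_of_pos hA, Real.mul_rpow hA.le hs0.le, ← mul_assoc]
    congr 1
    nth_rewrite 1 [← Real.rpow_one A]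
    rw [← Real.rpow_add hA]; congr 1; ring
  unfold Fw
  rw [div_pow, Real.sq_sqrt (by positivity), mul_pow, mul_pow, e1, e2, ← mul_div_assoc, e3,
    mul_pow A s 2]
  apply div_le_div_of_nonneg_right _ (by positivity)
  rw [mul_assoc]
  apply mul_le_mul_of_nonneg_left _ (by positivity)
  calc _ ≤ (min (|k| ^ ((1 : ℝ) / 4)) 1) ^ 2 * (|k| ^ (-(4 * δ)) * |s| ^ (4 * δ - 1)) :=
        mul_le_mul_of_nonneg_left (p_le δ k s h0 h1 hk hs) (by positivity)
    _ = ((min (|k| ^ ((1 : ℝ) / 4)) 1) ^ 2 * |k| ^ (-(4 * δ))) * |s| ^ (4 * δ - 1) := by ring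
    _ ≤ 1 * |s| ^ (4 * δ - 1) :=
        mul_le_mul_of_nonneg_right (min_le' δ k h0 h1 hk) (by positivity)
    _ = _ := one_mul _

lemma lint_Fw (δ A k t : ℝ) (h0 : 0 < δ) (h1 : δ < 1/12) (hA : 0 < A) (hk : k ≠ 0) :
    ∫⁻ η : ℝ, ENNReal.ofReal (Fw δ A k (η - k * t)) ^ 2
      ≤ ENNReal.ofReal (∫ x, Hmaj (1 - 4 * δ) (3 - 4 * δ) x) := by
  set H := Hmaj (1 - 4 * δ) (3 - 4 * δ) with hH
  have hI : Integrable H := Hmaj_integrable _ _ (by linarith) (by linarith)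
  have hI2 : Integrable (fun η => A * H (A * (η - k * t))) :=
    ((hI.comp_mul_left' hA.ne').comp_sub_right (k * t)).const_mul A
  have hval : ∫ η, A * H (A * (η - k * t)) = ∫ x, H x := by
    rw [integral_const_mul, integral_sub_right_eq_self (fun x => H (A * x)) (k * t),
      Measure.integral_comp_mul_left, abs_of_pos (inv_pos.2 hA), smul_eq_mul, ← mul_assoc,
      mul_inv_cancel₀ hA.ne', one_mul]
  rw [← hval, ofReal_integral_eq_lintegral_ofReal hI2
    (Filter.Eventually.of_forall fun η => mul_nonneg hA.le (Hmaj_nonneg _ _ _))]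
  apply lintegral_mono_ae
  have hne : ∀ᵐ η : ℝ, η ≠ k * t := by
    simp [ae_iff, measure_singleton]
  filter_upwards [hne] with η hη
  have hF : 0 ≤ Fw δ A k (η - k * t) := by unfold Fw; positivity
  rw [← ENNReal.ofReal_pow hF]
  exact ENNReal.ofReal_le_ofReal (Fw_sq_le δ A k _ h0 h1 hA hk (sub_ne_zero.2 hη))

lemma meas_jap : Measurable jap := by unfold jap; fun_prop

lemma meas_Aw (μ : ℝ) : Measurable (Aw μ) := by
  unfold Aw
  refine Measurable.ite (measurableSet_lt (by fun_prop) (by fun_prop)) (by fun_prop) (by fun_prop)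

/-- The common weight of the mixed norm. -/
def W2 (m δ t μ k η : ℝ) : ℝ :=
  jap k ^ m * Aw μ k ^ (2 * δ) * min (|k| ^ ((1 : ℝ) / 4)) 1 * pw t k η ^ (-(1 : ℝ) / 4)

lemma meas_W2 (m δ t μ : ℝ) : Measurable (fun x : ℝ × ℝ => W2 m δ t μ x.1 x.2) := by
  have h1 := meas_jap
  have h2 := meas_Aw μ
  unfold W2 pw
  fun_prop

lemma first_ineq (m δ t μ : ℝ) (hm : 0 < m) (Z : ℝ × ℝ → ℂ) (hZ : Measurable Z) :
    L1n (fun k η =>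
      jap k ^ (-(1 : ℝ) / 2) * Aw μ k ^ (2 * δ) * pw t k η ^ (-(1 : ℝ) / 4)) Z
    ≤ ENNReal.ofReal (∫ x, Hmaj (1/2) (1 + 2 * m) x) ^ ((1:ℝ)/2) * L2L1n (W2 m δ t μ) Z := by
  have hI : Integrable (Hmaj (1/2) (1 + 2 * m)) :=
    Hmaj_integrable _ _ (by norm_num) (by linarith)
  have hne : ∀ᵐ k : ℝ, k ≠ 0 := by simp [ae_iff, measure_singleton]
  have hGm : Measurable (Gw m) := by
    have h1 := meas_jap
    unfold Gw; fun_prop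
  have hW := meas_W2 m δ t μ
  have hin : Measurable (fun k : ℝ => ∫⁻ η : ℝ, ENNReal.ofReal (W2 m δ t μ k η)
      * (‖Z (k, η)‖₊ : ℝ≥0∞)) := by
    apply Measurable.lintegral_prod_right' (f := fun x : ℝ × ℝ =>
      ENNReal.ofReal (W2 m δ t μ x.1 x.2) * (‖Z x‖₊ : ℝ≥0∞))
    fun_prop
  have hG0 : ∀ k, 0 ≤ Gw m k := fun k => by
    have := jap_pos k
    unfold Gw; positivity
  unfold L1n L2L1n
  calc _ = ∫⁻ k : ℝ, ENNReal.ofReal (Gw m k) * ∫⁻ η : ℝ, ENNReal.ofReal (W2 m δ t μ k η)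
      * (‖Z (k, η)‖₊ : ℝ≥0∞) := by
        apply lintegral_congr_ae
        filter_upwards [hne] with k hk
        rw [← lintegral_const_mul' _ _ ENNReal.ofReal_ne_top]
        apply lintegral_congr
        intro η
        rw [← mul_assoc, ← ENNReal.ofReal_mul (hG0 k)]
        congr 2
        have hk0 : 0 < |k| := abs_pos.2 hk
        have hmin : 0 < min (|k| ^ ((1 : ℝ) / 4)) 1 := by positivity
        have hj : jap k ^ (-(1 : ℝ) / 2) = jap k ^ (-(1:ℝ)/2 - m) * jap k ^ m := by
          rw [← Real.rpow_add (jap_pos k)]; congr 1; ring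
        unfold Gw W2
        rw [hj]
        field_simp
    _ ≤ _ := cs_sq (by fun_prop) hin
    _ ≤ _ := by
        gcongr
        rw [ofReal_integral_eq_lintegral_ofReal hI
          (Filter.Eventually.of_forall fun η => Hmaj_nonneg _ _ _)]
        apply lintegral_mono_ae
        filter_upwards [hne] with k hk
        rw [← ENNReal.ofReal_pow (hG0 k)]
        exact ENNReal.ofReal_le_ofReal (Gw_sq_le m k hm hk)

lemma second_ineq (m δ t μ : ℝ) (h0 : 0 < δ) (h1 : δ < 1/12) (hμ : 0 < μ)
    (Z : ℝ × ℝ → ℂ) (hZ : Measurable Z) :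
    L2L1n (W2 m δ t μ) Z
    ≤ ENNReal.ofReal (∫ x, Hmaj (1 - 4 * δ) (3 - 4 * δ) x) ^ ((1:ℝ)/2) * En t μ m Z := by
  set K := ENNReal.ofReal (∫ x, Hmaj (1 - 4 * δ) (3 - 4 * δ) x) with hK
  have hne : ∀ᵐ k : ℝ, k ≠ 0 := by simp [ae_iff, measure_singleton]
  have hj := meas_jap
  have hAm := meas_Aw μ
  have hm1 : Measurable (fun x : ℝ × ℝ =>
      (ENNReal.ofReal (jap x.1 ^ m) * (‖Z x‖₊ : ℝ≥0∞)) ^ 2) := by fun_prop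
  have key : ∀ᵐ k : ℝ, (∫⁻ η : ℝ, ENNReal.ofReal (W2 m δ t μ k η) * (‖Z (k, η)‖₊ : ℝ≥0∞)) ^ 2
      ≤ K * ((∫⁻ η : ℝ, (ENNReal.ofReal (jap k ^ m) * (‖Z (k, η)‖₊ : ℝ≥0∞)) ^ 2)
        + ∫⁻ η : ℝ, (ENNReal.ofReal (jap k ^ m * Aw μ k * |η - k * t|)
          * (‖Z (k, η)‖₊ : ℝ≥0∞)) ^ 2) := by
    filter_upwards [hne] with k hk
    have hA := Aw_pos μ k hμ
    have hJ := jap_pos k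
    have hF0 : ∀ s, 0 ≤ Fw δ (Aw μ k) k s := fun s => by unfold Fw; positivity
    have hZk : Measurable (fun η => (‖Z (k, η)‖₊ : ℝ≥0∞)) := by fun_prop
    have hFm : Measurable (fun η => ENNReal.ofReal (Fw δ (Aw μ k) k (η - k * t))) := by
      unfold Fw; fun_prop
    have hgm : Measurable (fun η => ENNReal.ofReal (jap k ^ m
        * Real.sqrt (1 + Aw μ k ^ 2 * (η - k * t) ^ 2)) * (‖Z (k, η)‖₊ : ℝ≥0∞)) := by
      fun_prop
    have hm2 : Measurable (fun η =>
        (ENNReal.ofReal (jap k ^ m) * (‖Z (k, η)‖₊ : ℝ≥0∞)) ^ 2) := by fun_prop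
    have hcs := cs_sq hFm hgm
    have hcs2 := pow_le_pow_left₀ (zero_le) hcs 2
    rw [mul_pow, half_sq, half_sq] at hcs2
    have eL : ∫⁻ η : ℝ, ENNReal.ofReal (W2 m δ t μ k η) * (‖Z (k, η)‖₊ : ℝ≥0∞)
        = ∫⁻ η, ENNReal.ofReal (Fw δ (Aw μ k) k (η - k * t)) * (ENNReal.ofReal (jap k ^ m
        * Real.sqrt (1 + Aw μ k ^ 2 * (η - k * t) ^ 2)) * (‖Z (k, η)‖₊ : ℝ≥0∞)) := by
      apply lintegral_congr
      intro η
      rw [← mul_assoc, ← ENNReal.ofReal_mul (hF0 _)]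
      congr 2
      have hsq : 0 < Real.sqrt (1 + Aw μ k ^ 2 * (η - k * t) ^ 2) := by positivity
      unfold W2 Fw pw
      field_simp
    rw [eL]
    refine hcs2.trans (mul_le_mul' (lint_Fw δ (Aw μ k) k t h0 h1 hA hk) (le_of_eq ?_))
    rw [← lintegral_add_left hm2]
    apply lintegral_congr
    intro η
    rw [mul_pow, mul_pow, mul_pow, ← add_mul, ← ENNReal.ofReal_pow (by positivity),
      ← ENNReal.ofReal_pow (by positivity), ← ENNReal.ofReal_pow (by positivity),
      ← ENNReal.ofReal_add (by positivity) (by positivity)]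
    congr 2
    rw [mul_pow, Real.sq_sqrt (by positivity), mul_pow, mul_pow, sq_abs]
    ring
  unfold L2L1n En L2n
  calc _ ≤ (∫⁻ k : ℝ, K * ((∫⁻ η : ℝ, (ENNReal.ofReal (jap k ^ m) * (‖Z (k, η)‖₊ : ℝ≥0∞)) ^ 2)
        + ∫⁻ η : ℝ, (ENNReal.ofReal (jap k ^ m * Aw μ k * |η - k * t|)
          * (‖Z (k, η)‖₊ : ℝ≥0∞)) ^ 2)) ^ ((1:ℝ)/2) :=
        ENNReal.rpow_le_rpow (lintegral_mono_ae key) (by norm_num)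
    _ ≤ _ := by
        rw [lintegral_const_mul' _ _ ENNReal.ofReal_ne_top,
          ENNReal.mul_rpow_of_nonneg _ _ (by norm_num), lintegral_add_left hm1.lintegral_prod_right']
        gcongr
        exact ENNReal.rpow_add_le_add_rpow _ _ (by norm_num) (by norm_num)

/-- energy-only interpolation lemma: there is `C = C(m,δ)`
such that for all `t`, `μ ∈ (0,1)` and measurable `Z`,
`‖⟨k⟩^{−1/2} A(k)^{2δ} p^{−1/4} Z‖_{L¹}
  ≤ C‖⟨k⟩^m A(k)^{2δ} min(|k|^{1/4},1) p^{−1/4} Z‖_{L²_kL¹_η} ≤ C(1+μ^{−δ})E`. -/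
theorem stmt15 (m δ : ℝ) (hm : 0 < m) (hδ : δ ∈ Set.Ioo (0 : ℝ) (1 / 12)) :
    ∃ C : ℝ, 0 < C ∧
      ∀ (t μ : ℝ), μ ∈ Set.Ioo (0 : ℝ) 1 →
        ∀ Z : ℝ × ℝ → ℂ, Measurable Z →
          L1n (fun k η =>
              jap k ^ (-(1 : ℝ) / 2) * Aw μ k ^ (2 * δ) * pw t k η ^ (-(1 : ℝ) / 4)) Z
            ≤ ENNReal.ofReal C *
                L2L1n (fun k η =>
                  jap k ^ m * Aw μ k ^ (2 * δ) * min (|k| ^ ((1 : ℝ) / 4)) 1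
                    * pw t k η ^ (-(1 : ℝ) / 4)) Z ∧
          L2L1n (fun k η =>
              jap k ^ m * Aw μ k ^ (2 * δ) * min (|k| ^ ((1 : ℝ) / 4)) 1
                * pw t k η ^ (-(1 : ℝ) / 4)) Z
            ≤ ENNReal.ofReal C * ((1 + ENNReal.ofReal (μ ^ (-δ))) * En t μ m Z) := by
  obtain ⟨h0, h1⟩ := hδ
  set K1 := ∫ x, Hmaj (1/2) (1 + 2 * m) x with hK1
  set K2 := ∫ x, Hmaj (1 - 4 * δ) (3 - 4 * δ) x with hK2
  have hp1 : 0 ≤ K1 := integral_nonneg fun x => Hmaj_nonneg _ _ _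
  have hp2 : 0 ≤ K2 := integral_nonneg fun x => Hmaj_nonneg _ _ _
  have q1 : 0 ≤ K1 ^ ((1:ℝ)/2) := by positivity
  have q2 : 0 ≤ K2 ^ ((1:ℝ)/2) := by positivity
  refine ⟨1 + K1 ^ ((1:ℝ)/2) + K2 ^ ((1:ℝ)/2), by positivity, ?_⟩
  rintro t μ ⟨hμ, _⟩ Z hZ
  constructor
  · refine (first_ineq m δ t μ hm Z hZ).trans (mul_le_mul' ?_ le_rfl)
    rw [ENNReal.ofReal_rpow_of_nonneg hp1 (by norm_num)]
    exact ENNReal.ofReal_le_ofReal (by linarith)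
  · refine (second_ineq m δ t μ h0 h1 hμ Z hZ).trans (mul_le_mul' ?_ ?_)
    · rw [ENNReal.ofReal_rpow_of_nonneg hp2 (by norm_num)]
      exact ENNReal.ofReal_le_ofReal (by linarith)
    · exact le_mul_of_one_le_left zero_le le_self_add
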